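/- Let ℓ > 0 and T > 0, let f : [0, ℓ] × [0, T] → ℝ³ be continuously differentiable, and let 𝐪 = (q₀, q) : [0, ℓ] × [0, T] → ℝ⁴ be continuously differentiable with |𝐪(x,t)| = 1 for all (x,t). Let R : [0, ℓ] × [0, T] → ℝ^{3×3} be the rotation matrix parametrized by 𝐪, i.e. R = (q₀² − ⟨q, q⟩) I₃ + 2 q qᵀ + 2 q₀ q̂ pointwise. Let ∂_z denote the partial derivative with respect to either the first (spatial) or the second (time) variable, the same choice on both sides. Then ∂_z 𝐪 = 𝒰(f) 𝐪 holds on (0, ℓ) × (0, T) if and only if ∂_z R = R f̂ holds on (0, ℓ) × (0, T). -/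

import Mathlib

open Matrix

attribute [local instance] Matrix.normedAddCommGroup Matrix.normedSpace

/-- The skew-symmetric matrix of the cross product: `hat w ζ = w × ζ`. -/
def hat (w : Fin 3 → ℝ) : Matrix (Fin 3) (Fin 3) ℝ :=
  !![0, -w 2, w 1; w 2, 0, -w 0; -w 1, w 0, 0]

/-- The matrix `𝒰(w) = (1/2) [[0, −wᵀ], [w, −ŵ]]` acting on quaternions `ℝ⁴`. -/
noncomputable def Umat (w : Fin 3 → ℝ) : Matrix (Fin 4) (Fin 4) ℝ :=
  (1 / 2 : ℝ) •
    !![0, -w 0, -w 1, -w 2;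
       w 0, 0, w 2, -w 1;
       w 1, -w 2, 0, w 0;
       w 2, w 1, -w 0, 0]

/-- The rotation matrix parametrized by the quaternion `𝐪 = (q₀, q)`,
`R = (q₀² − ⟨q,q⟩) I₃ + 2 q qᵀ + 2 q₀ q̂`, where `q₀ = 𝐪 0` and `q = (𝐪 1, 𝐪 2, 𝐪 3)`. -/
noncomputable def rotOfQuat (Q : Fin 4 → ℝ) : Matrix (Fin 3) (Fin 3) ℝ :=
  letI q : Fin 3 → ℝ := fun i => Q i.succ
  (Q 0 ^ 2 - q ⬝ᵥ q) • (1 : Matrix (Fin 3) (Fin 3) ℝ)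
    + (2 : ℝ) • vecMulVec q q + (2 * Q 0) • hat q


/-- Explicit form of the rotation matrix. -/
theorem rotOfQuat_eq (q : Fin 4 → ℝ) : rotOfQuat q =
    !![q 0 ^ 2 + q 1 ^ 2 - q 2 ^ 2 - q 3 ^ 2, 2 * (q 1 * q 2) - 2 * (q 0 * q 3),
        2 * (q 1 * q 3) + 2 * (q 0 * q 2);
       2 * (q 1 * q 2) + 2 * (q 0 * q 3), q 0 ^ 2 - q 1 ^ 2 + q 2 ^ 2 - q 3 ^ 2,
        2 * (q 2 * q 3) - 2 * (q 0 * q 1);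
       2 * (q 1 * q 3) - 2 * (q 0 * q 2), 2 * (q 2 * q 3) + 2 * (q 0 * q 1),
        q 0 ^ 2 - q 1 ^ 2 - q 2 ^ 2 + q 3 ^ 2] := by
  have h2 : Fin.succ (1 : Fin 3) = (2 : Fin 4) := rfl
  have h3 : Fin.succ (2 : Fin 3) = (3 : Fin 4) := rfl
  ext i j
  fin_cases i <;> fin_cases j <;>
    simp [rotOfQuat, hat, dotProduct, Fin.sum_univ_succ, vecMulVec_apply, h2, h3] <;> ring

/-- The derivative of `rotOfQuat` at `q` in the direction `v`. -/
def rotD (q v : Fin 4 → ℝ) : Matrix (Fin 3) (Fin 3) ℝ :=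
    !![2 * (q 0 * v 0 + q 1 * v 1 - q 2 * v 2 - q 3 * v 3),
        2 * (q 1 * v 2 + v 1 * q 2) - 2 * (q 0 * v 3 + v 0 * q 3),
        2 * (q 1 * v 3 + v 1 * q 3) + 2 * (q 0 * v 2 + v 0 * q 2);
       2 * (q 1 * v 2 + v 1 * q 2) + 2 * (q 0 * v 3 + v 0 * q 3),
        2 * (q 0 * v 0 - q 1 * v 1 + q 2 * v 2 - q 3 * v 3),
        2 * (q 2 * v 3 + v 2 * q 3) - 2 * (q 0 * v 1 + v 0 * q 1);
       2 * (q 1 * v 3 + v 1 * q 3) - 2 * (q 0 * v 2 + v 0 * q 2),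
        2 * (q 2 * v 3 + v 2 * q 3) + 2 * (q 0 * v 1 + v 0 * q 1),
        2 * (q 0 * v 0 - q 1 * v 1 - q 2 * v 2 + q 3 * v 3)]

theorem differentiable_rotOfQuat : Differentiable ℝ rotOfQuat := by
  refine differentiable_pi.2 fun i => differentiable_pi.2 fun j => ?_
  simp only [rotOfQuat_eq]
  fin_cases i <;> fin_cases j <;> simp <;> fun_prop

theorem hasDerivAt_rotOfQuat {g : ℝ → Fin 4 → ℝ} {v : Fin 4 → ℝ} {t : ℝ}
    (hg : HasDerivAt g v t) : HasDerivAt (fun s => rotOfQuat (g s)) (rotD (g t) v) t := by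
  have h := hasDerivAt_pi.1 hg
  have hs : ∀ i, HasDerivAt (fun s => g s i ^ 2) (2 * (g t i * v i)) t := fun i =>
    ((h i).pow 2).congr_deriv (by simp; ring)
  have hm : ∀ i j, HasDerivAt (fun s => 2 * (g s i * g s j))
      (2 * (g t i * v j + v i * g t j)) t := fun i j =>
    (((h i).mul (h j)).const_mul 2).congr_deriv (by ring)
  refine hasDerivAt_pi.2 fun i => hasDerivAt_pi.2 fun j => ?_
  simp only [rotOfQuat_eq]
  fin_cases i <;> fin_cases j
  · exact ((((hs 0).add (hs 1)).sub (hs 2)).sub (hs 3)).congr_deriv (by simp [rotD]; ring)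
  · exact (hm 1 2).sub (hm 0 3)
  · exact (hm 1 3).add (hm 0 2)
  · exact (hm 1 2).add (hm 0 3)
  · exact ((((hs 0).sub (hs 1)).add (hs 2)).sub (hs 3)).congr_deriv (by simp [rotD]; ring)
  · exact (hm 2 3).sub (hm 0 1)
  · exact (hm 1 3).sub (hm 0 2)
  · exact (hm 2 3).add (hm 0 1)
  · exact ((((hs 0).sub (hs 1)).sub (hs 2)).add (hs 3)).congr_deriv (by simp [rotD]; ring)

theorem Umat_mulVec (w : Fin 3 → ℝ) (q : Fin 4 → ℝ) : Umat w *ᵥ q =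
    ![(- w 0 * q 1 - w 1 * q 2 - w 2 * q 3) / 2, (w 0 * q 0 + w 2 * q 2 - w 1 * q 3) / 2,
      (w 1 * q 0 - w 2 * q 1 + w 0 * q 3) / 2, (w 2 * q 0 + w 1 * q 1 - w 0 * q 2) / 2] := by
  ext i
  fin_cases i <;> simp [Umat, Matrix.mulVec, dotProduct, Fin.sum_univ_four] <;> ring

theorem rotD_Umat (w : Fin 3 → ℝ) (q : Fin 4 → ℝ) :
    rotD q (Umat w *ᵥ q) = rotOfQuat q * hat w := by
  rw [Umat_mulVec, rotOfQuat_eq]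
  ext i j
  fin_cases i <;> fin_cases j <;>
    simp [rotD, hat, Matrix.mul_apply, Fin.sum_univ_three] <;> ring

theorem rotD_inj (q v u : Fin 4 → ℝ) (hq : q ⬝ᵥ q = 1) (hv : q ⬝ᵥ v = 0) (hu : q ⬝ᵥ u = 0)
    (h : rotD q v = rotD q u) : v = u := by
  have e : ∀ i j, rotD q v i j = rotD q u i j := fun i j => by rw [h]
  have e00 := e 0 0
  have e01 := e 0 1
  have e02 := e 0 2
  have e10 := e 1 0
  have e11 := e 1 1
  have e12 := e 1 2
  have e20 := e 2 0
  have e21 := e 2 1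
  have e22 := e 2 2
  simp [rotD] at e00 e01 e02 e10 e11 e12 e20 e21 e22
  simp only [dotProduct, Fin.sum_univ_four] at hq hv hu
  obtain ⟨w, rfl⟩ : ∃ w, v = u + w := ⟨v - u, by simp⟩
  simp only [Pi.add_apply] at *
  have d0 : q 0 * w 0 = 0 := by linarith
  have d1 : q 1 * w 1 = 0 := by linarith
  have d2 : q 2 * w 2 = 0 := by linarith
  have d3 : q 3 * w 3 = 0 := by linarith
  have m01 : q 0 * w 1 + w 0 * q 1 = 0 := by linarith
  have m02 : q 0 * w 2 + w 0 * q 2 = 0 := by linarith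
  have m03 : q 0 * w 3 + w 0 * q 3 = 0 := by linarith
  have m12 : q 1 * w 2 + w 1 * q 2 = 0 := by linarith
  have m13 : q 1 * w 3 + w 1 * q 3 = 0 := by linarith
  have m23 : q 2 * w 3 + w 2 * q 3 = 0 := by linarith
  have w0 : w 0 = 0 := by
    linear_combination (-w 0) * hq + q 0 * d0 + q 1 * m01 + q 2 * m02 + q 3 * m03
      - q 0 * (d1 + d2 + d3)
  have w1 : w 1 = 0 := by
    linear_combination (-w 1) * hq + q 1 * d1 + q 0 * m01 + q 2 * m12 + q 3 * m13
      - q 1 * (d0 + d2 + d3)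
  have w2 : w 2 = 0 := by
    linear_combination (-w 2) * hq + q 2 * d2 + q 0 * m02 + q 1 * m12 + q 3 * m23
      - q 2 * (d0 + d1 + d3)
  have w3 : w 3 = 0 := by
    linear_combination (-w 3) * hq + q 3 * d3 + q 0 * m03 + q 1 * m13 + q 2 * m23
      - q 3 * (d0 + d1 + d2)
  ext i
  fin_cases i <;> simp [w0, w1, w2, w3]

/-- Unit-quaternion dynamics `∂_z 𝐪 = 𝒰(f) 𝐪` are equivalent to the rotation-matrix
dynamics `∂_z R = R f̂`, the derivative being taken with respect to either the first
(spatial) or the second (time) variable, the same choice on both sides. -/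
theorem stmt_11 (ℓ T : ℝ) (hℓ : 0 < ℓ) (hT : 0 < T)
    (f : ℝ × ℝ → (Fin 3 → ℝ)) (hf : ContDiffOn ℝ 1 f (Set.Icc 0 ℓ ×ˢ Set.Icc 0 T))
    (Q : ℝ × ℝ → (Fin 4 → ℝ)) (hQ : ContDiffOn ℝ 1 Q (Set.Icc 0 ℓ ×ˢ Set.Icc 0 T))
    (hunit : ∀ p ∈ Set.Icc (0 : ℝ) ℓ ×ˢ Set.Icc (0 : ℝ) T, Q p ⬝ᵥ Q p = 1)
    (R : ℝ × ℝ → Matrix (Fin 3) (Fin 3) ℝ) (hR : ∀ p, R p = rotOfQuat (Q p))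
    (d : ℝ × ℝ) (hd : d = ((1 : ℝ), (0 : ℝ)) ∨ d = ((0 : ℝ), (1 : ℝ))) :
    (∀ p ∈ Set.Ioo (0 : ℝ) ℓ ×ˢ Set.Ioo (0 : ℝ) T,
        fderiv ℝ Q p d = Umat (f p) *ᵥ Q p) ↔
    (∀ p ∈ Set.Ioo (0 : ℝ) ℓ ×ˢ Set.Ioo (0 : ℝ) T,
        fderiv ℝ R p d = R p * hat (f p)) := by
  have hnhds : ∀ p ∈ Set.Ioo (0 : ℝ) ℓ ×ˢ Set.Ioo (0 : ℝ) T,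
      Set.Icc (0 : ℝ) ℓ ×ˢ Set.Icc (0 : ℝ) T ∈ nhds p := fun p hp =>
    Filter.mem_of_superset ((isOpen_Ioo.prod isOpen_Ioo).mem_nhds hp)
      (Set.prod_mono Set.Ioo_subset_Icc_self Set.Ioo_subset_Icc_self)
  obtain rfl : R = fun p => rotOfQuat (Q p) := funext hR
  refine forall₂_congr fun p hp => ?_
  have hQd : DifferentiableAt ℝ Q p := (hQ.contDiffAt (hnhds p hp)).differentiableAt (by simp)
  have hline : HasDerivAt (fun t : ℝ => p + t • d) d 0 := by
    simpa using ((hasDerivAt_id (0 : ℝ)).smul_const d).const_add p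
  have hp0 : p + (0 : ℝ) • d = p := by simp
  have hg : HasDerivAt (fun t : ℝ => Q (p + t • d)) (fderiv ℝ Q p d) 0 :=
    HasFDerivAt.comp_hasDerivAt (0 : ℝ) (by rw [hp0]; exact hQd.hasFDerivAt) hline
  have hRd : DifferentiableAt ℝ (fun p => rotOfQuat (Q p)) p :=
    (differentiable_rotOfQuat (Q p)).comp p hQd
  have hr : HasDerivAt (fun t : ℝ => rotOfQuat (Q (p + t • d)))
      (fderiv ℝ (fun p => rotOfQuat (Q p)) p d) 0 :=
    HasFDerivAt.comp_hasDerivAt (l := fun p => rotOfQuat (Q p)) (0 : ℝ)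
      (by rw [hp0]; exact hRd.hasFDerivAt) hline
  have key : fderiv ℝ (fun p => rotOfQuat (Q p)) p d = rotD (Q p) (fderiv ℝ Q p d) := by
    have := hr.unique (hasDerivAt_rotOfQuat hg)
    rwa [hp0] at this
  rw [key, ← rotD_Umat]
  refine ⟨fun h => by rw [h], fun h => rotD_inj _ _ _ (hunit p (mem_of_mem_nhds (hnhds p hp))) ?_ ?_ h⟩
  · -- differentiate the constraint
    have hc := hasDerivAt_pi.1 hg
    have h1 : HasDerivAt (fun t : ℝ => Q (p + t • d) ⬝ᵥ Q (p + t • d))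
        (2 * (Q p ⬝ᵥ fderiv ℝ Q p d)) 0 := by
      simp only [dotProduct, Fin.sum_univ_four]
      refine (((((hc 0).mul (hc 0)).add ((hc 1).mul (hc 1))).add ((hc 2).mul (hc 2))).add
        ((hc 3).mul (hc 3))).congr_deriv ?_
      rw [hp0]
      ring
    have h2 : HasDerivAt (fun t : ℝ => Q (p + t • d) ⬝ᵥ Q (p + t • d)) 0 0 := by
      refine (hasDerivAt_const (0 : ℝ) (1 : ℝ)).congr_of_eventuallyEq ?_
      have := hline.continuousAt.preimage_mem_nhds (by rw [hp0]; exact hnhds p hp)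
      filter_upwards [this] with t ht
      exact hunit _ ht
    have := h1.unique h2
    linarith
  · rw [Umat_mulVec]
    simp [dotProduct, Fin.sum_univ_four]
    ring
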